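/- There do not exist four points P₀, P₁, P₂, P₃ in the Euclidean plane ℝ² such that all six pairwise distances dist(Pᵢ, Pⱼ) (i ≠ j) are odd integers. (Equivalently, K₄ is not an odd-distance graph.) -/

import Mathlib

/-!
The Gram matrix of the three vectors `P i - P 0` is singular, since they lie in a plane.
Twice this matrix is determined by the squared distances (`2⟪u, v⟫ = |u|² + |v|² - |u - v|²`),
so when all distances are odd integers it is an integer matrix. Odd squares are `1` modulo `8`,
so it is congruent modulo `8` to the matrix with `2` on the diagonal and `1` elsewhere, whose
determinant is `4`, which is nonzero modulo `8`: a contradiction.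
-/

/-- The determinant of the doubled Gram matrix of three vectors, in terms of their squared lengths
`A`, `B`, `C` and the squared lengths `D`, `E`, `F` of their differences (first and second, first
and third, second and third). -/
def doubledGramDet {R : Type*} [CommRing R] (A B C D E F : R) : R :=
  2 * A * (2 * B * (2 * C) - (B + C - F) ^ 2)
    - (A + B - D) * ((A + B - D) * (2 * C) - (A + C - E) * (B + C - F))
    + (A + C - E) * ((A + B - D) * (B + C - F) - 2 * B * (A + C - E))

theorem dist_sq_plane (x y : EuclideanSpace ℝ (Fin 2)) :
    dist x y ^ 2 = (x 0 - y 0) ^ 2 + (x 1 - y 1) ^ 2 := by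
  rw [EuclideanSpace.dist_sq_eq, Fin.sum_univ_two, Real.dist_eq, Real.dist_eq, sq_abs, sq_abs]

theorem doubledGramDet_plane (p q r s : EuclideanSpace ℝ (Fin 2)) :
    doubledGramDet (dist p q ^ 2) (dist p r ^ 2) (dist p s ^ 2)
      (dist q r ^ 2) (dist q s ^ 2) (dist r s ^ 2) = 0 := by
  simp only [doubledGramDet, dist_sq_plane]
  ring

theorem odd_sq_zmod_eight (x : ZMod 8) : (2 * x + 1) ^ 2 = 1 := by
  revert x
  decide

/-- **`K₄` is not an odd-distance graph.** There do not exist four points in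
the Euclidean plane all of whose pairwise distances are odd integers. -/
theorem no_four_points_pairwise_odd_distances :
    ¬ ∃ P : Fin 4 → EuclideanSpace ℝ (Fin 2),
        ∀ i j : Fin 4, i ≠ j → ∃ k : ℕ, dist (P i) (P j) = 2 * k + 1 := by
  rintro ⟨P, h⟩
  obtain ⟨a, ha⟩ := h 0 1 (by decide)
  obtain ⟨b, hb⟩ := h 0 2 (by decide)
  obtain ⟨c, hc⟩ := h 0 3 (by decide)
  obtain ⟨d, hd⟩ := h 1 2 (by decide)
  obtain ⟨e, he⟩ := h 1 3 (by decide)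
  obtain ⟨f, hf⟩ := h 2 3 (by decide)
  have hreal := doubledGramDet_plane (P 0) (P 1) (P 2) (P 3)
  rw [ha, hb, hc, hd, he, hf] at hreal
  have hint : doubledGramDet ((2 * (a : ℤ) + 1) ^ 2) ((2 * (b : ℤ) + 1) ^ 2)
      ((2 * (c : ℤ) + 1) ^ 2) ((2 * (d : ℤ) + 1) ^ 2) ((2 * (e : ℤ) + 1) ^ 2)
      ((2 * (f : ℤ) + 1) ^ 2) = 0 := by
    unfold doubledGramDet at hreal ⊢
    exact_mod_cast hreal
  have hmod := congrArg (Int.cast : ℤ → ZMod 8) hint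
  simp only [doubledGramDet] at hmod
  push_cast at hmod
  simp only [odd_sq_zmod_eight] at hmod
  revert hmod
  decide
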